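/- arXiv:2511.13477 — 2 statements merged into one kernel-verified Lean document; each statement's English description precedes it below -/
import Mathlib

section
/- Let t ≥ 1 be an integer and λ = (λ_1 ≥ λ_2 ≥ ⋯ ≥ λ_r ≥ 1) a partition with r ≥ 2 parts, and set n = (r−1)t + λ_1. Then every facet (maximal face) of the t-Young complex Δ_t^λ is a facet of Δ_{n,t}^{[r−1]}; in particular Δ_t^λ ⊆ Δ_{n,t}^{[r−1]} and the set of facets of Δ_t^λ is contained in the set of facets of Δ_{n,t}^{[r−1]}. -/
/-- The interval `{b, b+1, …, b+t-1}` (a `t`-path of the path graph, as a vertex set). -/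
def pathInterval (b t : ℕ) : Finset ℕ := Finset.Icc b (b + t - 1)

/-- `F` contains `k` pairwise disjoint intervals `{b, …, b+t-1} ⊆ [n]`. -/
def containsMatching (n t k : ℕ) (F : Finset ℕ) : Prop :=
  ∃ b : Fin k → ℕ,
    (∀ j, 1 ≤ b j ∧ b j + t - 1 ≤ n) ∧
    (∀ i j : Fin k, i ≠ j → Disjoint (pathInterval (b i) t) (pathInterval (b j) t)) ∧
    ∀ j, pathInterval (b j) t ⊆ F

/-- `Δ_{n,t}^{[k]}`, the Alexander dual of the Stanley–Reisner complex of the `k`-th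
squarefree power of the `t`-path ideal of `P_n`: its faces are the sets `[n] ∖ F` where
`F ⊆ [n]` contains `k` pairwise disjoint intervals of the form `{b, …, b+t-1} ⊆ [n]`. -/
def dualComplex (n t k : ℕ) : Set (Finset ℕ) :=
  { G | ∃ F : Finset ℕ, F ⊆ Finset.Icc 1 n ∧ containsMatching n t k F ∧
        G = Finset.Icc 1 n \ F }

/-- `lam` encodes (via the values `lam 1 ≥ lam 2 ≥ ⋯ ≥ lam r ≥ 1`) a partition
`λ = (λ_1 ≥ ⋯ ≥ λ_r ≥ 1)` with `r` parts. -/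
def isPartition (r : ℕ) (lam : ℕ → ℕ) : Prop :=
  (∀ j, 1 ≤ j → j ≤ r → 1 ≤ lam j) ∧
  ∀ j j', 1 ≤ j → j ≤ j' → j' ≤ r → lam j' ≤ lam j

/-- `a` is an entry of column `i` of the filled Young diagram of `λ`, i.e.
`a = (r - j)t + i` for some row `1 ≤ j ≤ r` with `λ_j ≥ i`. -/
def inColumn (t r : ℕ) (lam : ℕ → ℕ) (i a : ℕ) : Prop :=
  ∃ j, 1 ≤ j ∧ j ≤ r ∧ i ≤ lam j ∧ a = (r - j) * t + i

/-- The `t`-Young complex `Δ_t^λ`: the simplicial complex generated by the sets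
`{a_1 < a_2 < ⋯ < a_{λ_1}}` where each `a_i` is a column-`i` entry of the filled
Young diagram of `λ`. -/
def youngComplex (t r : ℕ) (lam : ℕ → ℕ) : Set (Finset ℕ) :=
  { F | ∃ a : ℕ → ℕ,
      (∀ i, 1 ≤ i → i < lam 1 → a i < a (i + 1)) ∧
      (∀ i, 1 ≤ i → i ≤ lam 1 → inColumn t r lam i (a i)) ∧
      F ⊆ Finset.image a (Finset.Icc 1 (lam 1)) }

/-- `G` is a facet (maximal face) of the complex `Δ`. -/
def isFacet (Δ : Set (Finset ℕ)) (G : Finset ℕ) : Prop :=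
  G ∈ Δ ∧ ∀ G' ∈ Δ, G ⊆ G' → G' = G

/-!
A set of `k` disjoint `t`-paths has `k * t` elements, so every face of `Δ_{n,t}^{[k]}` with
`n = k * t + l` has at most `l` elements, and any face with exactly `l` elements is a facet. It
therefore suffices that the generators of the Young complex, which have `l = λ_1` elements, are
faces. In a generator `a_1 < ⋯ < a_l`, each `a_i` has the form `c_i * t + i` with `c_i` weakly
increasing and at most `k = r - 1`, so that the gaps of the generator in `[n]` have lengths
divisible by `t` and can be cut into `k` consecutive `t`-paths.
-/

theorem pathInterval_add_one (b t : ℕ) : pathInterval (b + 1) t = Finset.Ioc b (b + t) := by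
  ext x
  simp only [pathInterval, Finset.mem_Icc, Finset.mem_Ioc]
  omega

theorem card_pathInterval {b t : ℕ} (hb : 0 < b) : (pathInterval b t).card = t := by
  obtain ⟨b, rfl⟩ := Nat.exists_eq_add_one.2 hb
  simp [pathInterval_add_one]

theorem containsMatching.mono {n t k : ℕ} {F F' : Finset ℕ} (h : containsMatching n t k F)
    (hF : F ⊆ F') : containsMatching n t k F' := by
  obtain ⟨b, hb, hdisj, hsub⟩ := h
  exact ⟨b, hb, hdisj, fun j => (hsub j).trans hF⟩

theorem containsMatching.mul_le_card {n t k : ℕ} {F : Finset ℕ} (h : containsMatching n t k F) :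
    k * t ≤ F.card := by
  obtain ⟨b, hb, hdisj, hsub⟩ := h
  calc k * t = ∑ j, (pathInterval (b j) t).card := by
        simp [fun j => card_pathInterval (t := t) (hb j).1]
    _ = (Finset.univ.biUnion fun j => pathInterval (b j) t).card :=
        (Finset.card_biUnion fun i _ j _ hij => hdisj i j hij).symm
    _ ≤ F.card := Finset.card_le_card (Finset.biUnion_subset.2 fun j _ => hsub j)

theorem mem_dualComplex_iff {n t k : ℕ} {G : Finset ℕ} :
    G ∈ dualComplex n t k ↔
      G ⊆ Finset.Icc 1 n ∧ containsMatching n t k (Finset.Icc 1 n \ G) := by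
  constructor
  · rintro ⟨F, hF, hmatch, rfl⟩
    exact ⟨Finset.sdiff_subset, by rwa [Finset.sdiff_sdiff_eq_self hF]⟩
  · rintro ⟨hG, hmatch⟩
    exact ⟨_, Finset.sdiff_subset, hmatch, (Finset.sdiff_sdiff_eq_self hG).symm⟩

theorem isLowerSet_dualComplex (n t k : ℕ) : IsLowerSet (dualComplex n t k) := by
  intro G G' hle hG
  obtain ⟨hGn, hmatch⟩ := mem_dualComplex_iff.1 hG
  exact mem_dualComplex_iff.2
    ⟨hle.trans hGn, hmatch.mono (Finset.sdiff_subset_sdiff subset_rfl hle)⟩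

theorem mul_add_card_le_of_mem_dualComplex {n t k : ℕ} {G : Finset ℕ}
    (hG : G ∈ dualComplex n t k) : k * t + G.card ≤ n := by
  obtain ⟨hGn, hmatch⟩ := mem_dualComplex_iff.1 hG
  calc k * t + G.card ≤ (Finset.Icc 1 n \ G).card + G.card := by gcongr; exact hmatch.mul_le_card
    _ = n := by rw [Finset.card_sdiff_add_card_eq_card hGn, Nat.card_Icc, Nat.add_sub_cancel]

theorem add_le_add_of_strictMonoOn {f : ℕ → ℕ} {s : Set ℕ} [hs : s.OrdConnected]
    (hf : StrictMonoOn f s) {i j : ℕ} (hi : i ∈ s) (hj : j ∈ s) (hij : i ≤ j) :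
    f i + j ≤ f j + i := by
  induction j, hij using Nat.le_induction with
  | base => exact le_rfl
  | succ j hij ih =>
    have hjs : j ∈ s := hs.out hi hj ⟨hij, j.le_succ⟩
    have := hf hjs hj j.lt_succ_self
    have := ih hjs
    omega

/-- The last index `i ≤ l` with `a i ≤ q * t + i`, and `0` if no positive index qualifies. When
`0 < t` and `a i = c i * t + i` with `c` weakly increasing, this is the number of positive indices
`i ≤ l` with `c i ≤ q`, that is, the number of `a i` lying before the `q`-th `t`-path cut out of
the complement of the sequence (counting the paths from `0`). -/
def lastIndexBelow (t : ℕ) (a : ℕ → ℕ) (l q : ℕ) : ℕ :=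
  Nat.findGreatest (fun i => a i ≤ q * t + i) l

theorem lastIndexBelow_le (t : ℕ) (a : ℕ → ℕ) (l q : ℕ) : lastIndexBelow t a l q ≤ l :=
  Nat.findGreatest_le l

theorem lastIndexBelow_mono (t : ℕ) (a : ℕ → ℕ) (l : ℕ) : Monotone (lastIndexBelow t a l) := by
  intro q q' hq
  refine Nat.findGreatest_mono_left (fun i hi => hi.trans ?_) l
  gcongr

theorem le_lastIndexBelow_iff {t l q i : ℕ} {a : ℕ → ℕ} (ha : StrictMonoOn a (Set.Icc 1 l))
    (hi : i ∈ Set.Icc 1 l) : i ≤ lastIndexBelow t a l q ↔ a i ≤ q * t + i := by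
  refine ⟨fun hle => ?_, fun hle => Nat.le_findGreatest hi.2 hle⟩
  have hpos : 0 < lastIndexBelow t a l q := hi.1.trans hle
  have hlast : a (lastIndexBelow t a l q) ≤ q * t + lastIndexBelow t a l q :=
    Nat.findGreatest_of_ne_zero (P := fun i => a i ≤ q * t + i) rfl hpos.ne'
  have := add_le_add_of_strictMonoOn ha hi ⟨hpos, lastIndexBelow_le t a l q⟩ hle
  omega

theorem mul_add_add_le_mul_add {q q' x y : ℕ} (t : ℕ) (hq : q < q') (hxy : x ≤ y) :
    q * t + x + t ≤ q' * t + y :=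
  calc q * t + x + t = (q + 1) * t + x := by ring
    _ ≤ q' * t + y := by gcongr; exact hq

theorem disjoint_pathInterval_lastIndexBelow {q q' : ℕ} (t : ℕ) (a : ℕ → ℕ) (l : ℕ)
    (hq : q < q') :
    Disjoint (pathInterval (q * t + lastIndexBelow t a l q + 1) t)
      (pathInterval (q' * t + lastIndexBelow t a l q' + 1) t) := by
  rw [pathInterval_add_one, pathInterval_add_one]
  exact Finset.Ioc_disjoint_Ioc_of_le
    (mul_add_add_le_mul_add t hq (lastIndexBelow_mono t a l hq.le))

theorem notMem_pathInterval_lastIndexBelow {t l i c : ℕ} {a : ℕ → ℕ}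
    (ha : StrictMonoOn a (Set.Icc 1 l)) (hi : i ∈ Set.Icc 1 l) (hai : a i = c * t + i) (q : ℕ) :
    a i ∉ pathInterval (q * t + lastIndexBelow t a l q + 1) t := by
  rw [pathInterval_add_one, Finset.mem_Ioc]
  rintro ⟨hlt, hle⟩
  by_cases him : i ≤ lastIndexBelow t a l q
  · have := (le_lastIndexBelow_iff ha hi).1 him
    omega
  · have hqc : q < c := by
      have := mt (le_lastIndexBelow_iff ha hi).2 him
      exact lt_of_mul_lt_mul_right (by omega : q * t < c * t) t.zero_le
    have := mul_add_add_le_mul_add t hqc (le_refl i)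
    omega

theorem containsMatching_sdiff_image {t l : ℕ} {a : ℕ → ℕ} (ha : StrictMonoOn a (Set.Icc 1 l))
    (hcol : ∀ i ∈ Set.Icc 1 l, ∃ c, a i = c * t + i) (k : ℕ) :
    containsMatching (k * t + l) t k
      (Finset.Icc 1 (k * t + l) \ (Finset.Icc 1 l).image a) := by
  have hbound (q : Fin k) : 1 ≤ q * t + lastIndexBelow t a l q + 1 ∧
      q * t + lastIndexBelow t a l q + 1 + t - 1 ≤ k * t + l := by
    have := mul_add_add_le_mul_add t q.isLt (lastIndexBelow_le t a l q)
    omega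
  refine ⟨fun q => q * t + lastIndexBelow t a l q + 1, hbound, fun q q' hne => ?_, fun q => ?_⟩
  · rcases lt_or_gt_of_ne hne with h | h
    · exact disjoint_pathInterval_lastIndexBelow t a l h
    · exact (disjoint_pathInterval_lastIndexBelow t a l h).symm
  · refine Finset.subset_sdiff.2 ⟨Finset.Icc_subset_Icc (hbound q).1 (hbound q).2, ?_⟩
    refine Finset.disjoint_right.2 fun x hx => ?_
    obtain ⟨i, hi, rfl⟩ := Finset.mem_image.1 hx
    obtain ⟨c, hai⟩ := hcol i (Finset.mem_Icc.1 hi)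
    exact notMem_pathInterval_lastIndexBelow ha (Finset.mem_Icc.1 hi) hai q

theorem image_mem_dualComplex {t k l : ℕ} {a : ℕ → ℕ} (ha : StrictMonoOn a (Set.Icc 1 l))
    (hcol : ∀ i ∈ Set.Icc 1 l, ∃ c ≤ k, a i = c * t + i) :
    (Finset.Icc 1 l).image a ∈ dualComplex (k * t + l) t k := by
  refine mem_dualComplex_iff.2 ⟨Finset.image_subset_iff.2 fun i hi => ?_,
    containsMatching_sdiff_image ha (fun i hi => (hcol i hi).imp fun _ => And.right) k⟩
  rw [Finset.mem_Icc] at hi ⊢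
  obtain ⟨c, hc, hai⟩ := hcol i hi
  have := Nat.mul_le_mul_right t hc
  omega

theorem inColumn.exists_eq_mul_add {t k i x : ℕ} {lam : ℕ → ℕ}
    (h : inColumn t (k + 1) lam i x) : ∃ c ≤ k, x = c * t + i := by
  obtain ⟨j, hj, -, -, rfl⟩ := h
  exact ⟨k + 1 - j, by omega, rfl⟩

theorem strictMonoOn_Icc_of_lt_add_one {a : ℕ → ℕ} {m l : ℕ}
    (ha : ∀ i, m ≤ i → i < l → a i < a (i + 1)) : StrictMonoOn a (Set.Icc m l) :=
  strictMonoOn_of_lt_succ Set.ordConnected_Icc fun i _ hi hi' => ha i hi.1 hi'.2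

theorem youngComplex_subset_dualComplex (t k : ℕ) (lam : ℕ → ℕ) :
    youngComplex t (k + 1) lam ⊆ dualComplex (k * t + lam 1) t k := by
  rintro G ⟨a, ha, hcol, hG⟩
  exact isLowerSet_dualComplex _ _ _ hG <|
    image_mem_dualComplex (strictMonoOn_Icc_of_lt_add_one ha) fun i hi =>
      (hcol i hi.1 hi.2).exists_eq_mul_add

theorem card_eq_of_isFacet_youngComplex {t r : ℕ} {lam : ℕ → ℕ} {G : Finset ℕ}
    (h : isFacet (youngComplex t r lam) G) : G.card = lam 1 := by
  obtain ⟨⟨a, ha, hcol, hG⟩, hmax⟩ := h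
  have ha_inj : Set.InjOn a (Finset.Icc 1 (lam 1)) := by
    simpa using (strictMonoOn_Icc_of_lt_add_one ha).injOn
  rw [← hmax _ ⟨a, ha, hcol, subset_rfl⟩ hG, Finset.card_image_of_injOn ha_inj, Nat.card_Icc,
    Nat.add_sub_cancel]

theorem isFacet_of_card_le {Δ : Set (Finset ℕ)} {G : Finset ℕ} (hG : G ∈ Δ)
    (hcard : ∀ G' ∈ Δ, G'.card ≤ G.card) : isFacet Δ G :=
  ⟨hG, fun G' hG' hsub => (Finset.eq_of_subset_of_card_le hsub (hcard G' hG')).symm⟩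

-- Writing the number of rows as `k + 1` keeps the truncated subtraction `r - 1` out of the case
-- `r = 0`.
theorem youngComplex_facets_subset_general (t k : ℕ) (lam : ℕ → ℕ) :
    (∀ G, isFacet (youngComplex t (k + 1) lam) G → isFacet (dualComplex (k * t + lam 1) t k) G) ∧
    youngComplex t (k + 1) lam ⊆ dualComplex (k * t + lam 1) t k := by
  have hsub := youngComplex_subset_dualComplex t k lam
  refine ⟨fun G hG => isFacet_of_card_le (hsub hG.1) fun G' hG' => ?_, hsub⟩
  have := mul_add_card_le_of_mem_dualComplex hG'
  rw [card_eq_of_isFacet_youngComplex hG]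
  omega

/-- For a partition `λ` with `r ≥ 2` parts and `n = (r-1)t + λ_1`, every facet of the
`t`-Young complex `Δ_t^λ` is a facet of `Δ_{n,t}^{[r-1]}`; in particular
`Δ_t^λ ⊆ Δ_{n,t}^{[r-1]}`. -/
theorem youngComplex_facets_subset (t r : ℕ) (lam : ℕ → ℕ) (ht : 1 ≤ t) (hr : 2 ≤ r)
    (hlam : isPartition r lam) :
    (∀ G, isFacet (youngComplex t r lam) G →
        isFacet (dualComplex ((r - 1) * t + lam 1) t (r - 1)) G) ∧
    youngComplex t r lam ⊆ dualComplex ((r - 1) * t + lam 1) t (r - 1) := by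
  obtain ⟨k, rfl⟩ := Nat.exists_eq_add_of_le' (one_le_two.trans hr)
  exact youngComplex_facets_subset_general t k lam
end

section
/- Let t ≥ 1 be an integer and λ = (λ_1 ≥ λ_2 ≥ ⋯ ≥ λ_r ≥ 1) a partition with r ≥ 2 and λ_1 = λ_2 ≤ t. Then the subcomplex of the t-Young complex Δ_t^λ consisting of all faces disjoint from the top row, namely {F ∈ Δ_t^λ : F ∩ {(r−1)t+1, (r−1)t+2, …, (r−1)t+λ_1} = ∅}, is equal to the t-Young complex Δ_t^{λ'}, where λ' = (λ_2, λ_3, …, λ_r). -/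
/-!
Replacing each entry `a i` of a generator of `Δ_t^λ` by `min (a i) (second-row entry of column i)`
pushes the top-row entries down one row and moves nothing else, since lower rows hold smaller
entries in the same column; strict monotonicity survives because both arguments of the minimum
increase strictly. A face that avoids the top row only uses columns up to `λ_2`, so it survives in
`Δ_t^{λ'}`. Conversely, a generator of `Δ_t^{λ'}` extends to one of `Δ_t^λ` by appending top-row
entries in the columns beyond `λ_2`, and it avoids the top row because all its entries are at most
`(r - 1)t` when `λ_2 ≤ t`.
-/

section Columns

variable {t r i a : ℕ} {lam : ℕ → ℕ}

namespace inColumn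

theorem le_top (h : inColumn t r lam i a) : a ≤ (r - 1) * t + i := by
  obtain ⟨j, hj, -, -, rfl⟩ := h
  gcongr

theorem le_mul (h : inColumn t r lam i a) (hi : i ≤ t) : a ≤ r * t := by
  have hr : 1 ≤ r := by
    obtain ⟨j, hj, hjr, -⟩ := h
    exact hj.trans hjr
  calc
    a ≤ (r - 1) * t + t := h.le_top.trans (by gcongr)
    _ = r * t := by rw [← Nat.succ_mul, Nat.succ_eq_add_one, Nat.sub_add_cancel hr]

end inColumn

theorem inColumn_top (hr : 1 ≤ r) (hi : i ≤ lam 1) : inColumn t r lam i ((r - 1) * t + i) :=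
  ⟨1, le_rfl, hr, hi, rfl⟩

theorem inColumn_succ_iff :
    inColumn t (r + 1) lam i a ↔
      (i ≤ lam 1 ∧ a = r * t + i) ∨ inColumn t r (fun j => lam (j + 1)) i a := by
  constructor
  · rintro ⟨_ | _ | j, hj, hjr, hi, rfl⟩
    · omega
    · exact .inl ⟨hi, rfl⟩
    · exact .inr ⟨j + 1, by omega, by omega, hi, by rw [Nat.add_sub_add_right]⟩
  · rintro (⟨hi, rfl⟩ | ⟨j, hj, hjr, hi, rfl⟩)
    · exact inColumn_top (by omega) hi
    · exact ⟨j + 1, by omega, by omega, hi, by rw [Nat.add_sub_add_right]⟩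

theorem inColumn.min_secondRow (h : inColumn t (r + 1) lam i a) (hr : 1 ≤ r) (hi : i ≤ lam 2) :
    inColumn t r (fun j => lam (j + 1)) i (min a ((r - 1) * t + i)) := by
  rcases inColumn_succ_iff.mp h with ⟨-, rfl⟩ | hlow
  · rw [min_eq_right (by gcongr; omega)]
    exact inColumn_top hr hi
  · rwa [min_eq_left hlow.le_top]

end Columns

/-- `a 1 < ⋯ < a λ_1` picks one entry from each column of the filled diagram, so that
`{a 1, …, a λ_1}` is one of the generators of `Δ_t^λ`. Values of `a` outside `1, …, λ_1` are
ignored. -/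
structure IsColumnChain (t r : ℕ) (lam a : ℕ → ℕ) : Prop where
  lt_succ : ∀ i, 1 ≤ i → i < lam 1 → a i < a (i + 1)
  inColumn : ∀ i, 1 ≤ i → i ≤ lam 1 → inColumn t r lam i (a i)

/-- The entries of the first row of the filled diagram of `λ`. -/
def topRow (t r : ℕ) (lam : ℕ → ℕ) : Finset ℕ :=
  Finset.image (fun i => (r - 1) * t + i) (Finset.Icc 1 (lam 1))

section DeleteTopRow

variable {t r : ℕ} {lam a : ℕ → ℕ} {F : Finset ℕ}

theorem mem_youngComplex_iff :
    F ∈ youngComplex t r lam ↔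
      ∃ a, IsColumnChain t r lam a ∧ F ⊆ Finset.image a (Finset.Icc 1 (lam 1)) :=
  ⟨fun ⟨a, hlt, hcol, hF⟩ => ⟨a, ⟨hlt, hcol⟩, hF⟩,
    fun ⟨a, ha, hF⟩ => ⟨a, ha.lt_succ, ha.inColumn, hF⟩⟩

namespace IsColumnChain

theorem min_secondRow (ha : IsColumnChain t (r + 1) lam a) (hr : 1 ≤ r) (h21 : lam 2 ≤ lam 1) :
    IsColumnChain t r (fun j => lam (j + 1)) (fun i => min (a i) ((r - 1) * t + i)) where
  lt_succ i hi hi2 := min_lt_min (ha.lt_succ i hi (hi2.trans_le h21)) (by omega)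
  inColumn i hi hi2 := (ha.inColumn i hi (hi2.trans h21)).min_secondRow hr hi2

theorem extend_topRow (ha : IsColumnChain t r (fun j => lam (j + 1)) a) :
    IsColumnChain t (r + 1) lam (fun i => if i ≤ lam 2 then a i else r * t + i) where
  lt_succ i hi _ := by
    rcases lt_trichotomy i (lam 2) with hlt | rfl | hgt
    · simpa only [if_pos hlt.le, if_pos (Nat.succ_le_of_lt hlt)] using ha.lt_succ i hi hlt
    · rw [if_pos le_rfl, if_neg (by omega)]
      calc
        a (lam 2) ≤ (r - 1) * t + lam 2 := (ha.inColumn _ hi le_rfl).le_top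
        _ ≤ r * t + lam 2 := by gcongr; omega
        _ < r * t + (lam 2 + 1) := by omega
    · rw [if_neg (by omega), if_neg (by omega)]
      omega
  inColumn i hi hi1 := by
    rw [inColumn_succ_iff]
    split_ifs with hi2
    · exact .inr (ha.inColumn i hi hi2)
    · exact .inl ⟨hi1, rfl⟩

end IsColumnChain

theorem mem_youngComplex_tail_of_disjoint_topRow (hr : 1 ≤ r) (h21 : lam 2 ≤ lam 1)
    (hrows : ∀ j, 2 ≤ j → j ≤ r + 1 → min (lam 1) (lam j) ≤ lam 2)
    (hF : F ∈ youngComplex t (r + 1) lam) (hdisj : Disjoint F (topRow t (r + 1) lam)) :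
    F ∈ youngComplex t r (fun j => lam (j + 1)) := by
  obtain ⟨a, ha, hFa⟩ := mem_youngComplex_iff.mp hF
  refine mem_youngComplex_iff.mpr ⟨_, ha.min_secondRow hr h21, fun x hx => ?_⟩
  obtain ⟨i, hi, rfl⟩ := Finset.mem_image.mp (hFa hx)
  obtain ⟨hi0, hi1⟩ := Finset.mem_Icc.mp hi
  have hlow : inColumn t r (fun j => lam (j + 1)) i (a i) :=
    (inColumn_succ_iff.mp (ha.inColumn i hi0 hi1)).resolve_left fun htop =>
      Finset.disjoint_left.mp hdisj hx (Finset.mem_image.mpr ⟨i, hi, htop.2.symm⟩)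
  have hi2 : i ≤ lam 2 := by
    obtain ⟨j, hj, hjr, hij, -⟩ := hlow
    exact (le_min hi1 hij).trans (hrows (j + 1) (by omega) (by omega))
  exact Finset.mem_image.mpr ⟨i, Finset.mem_Icc.mpr ⟨hi0, hi2⟩, min_eq_left hlow.le_top⟩

theorem youngComplex_tail_subset (h21 : lam 2 ≤ lam 1) :
    youngComplex t r (fun j => lam (j + 1)) ⊆ youngComplex t (r + 1) lam := by
  intro F hF
  obtain ⟨a, ha, hFa⟩ := mem_youngComplex_iff.mp hF
  refine mem_youngComplex_iff.mpr ⟨_, ha.extend_topRow, fun x hx => ?_⟩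
  obtain ⟨i, hi, rfl⟩ := Finset.mem_image.mp (hFa hx)
  obtain ⟨hi0, hi2⟩ := Finset.mem_Icc.mp hi
  exact Finset.mem_image.mpr ⟨i, Finset.mem_Icc.mpr ⟨hi0, hi2.trans h21⟩, if_pos hi2⟩

theorem le_mul_of_mem_youngComplex (ht : lam 1 ≤ t) (hF : F ∈ youngComplex t r lam) {x : ℕ}
    (hx : x ∈ F) : x ≤ r * t := by
  obtain ⟨a, ha, hFa⟩ := mem_youngComplex_iff.mp hF
  obtain ⟨i, hi, rfl⟩ := Finset.mem_image.mp (hFa hx)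
  obtain ⟨hi0, hi1⟩ := Finset.mem_Icc.mp hi
  exact (ha.inColumn i hi0 hi1).le_mul (hi1.trans ht)

theorem disjoint_topRow_of_mem_youngComplex_tail (ht : lam 2 ≤ t)
    (hF : F ∈ youngComplex t r (fun j => lam (j + 1))) : Disjoint F (topRow t (r + 1) lam) := by
  refine Finset.disjoint_left.mpr fun x hx htop => ?_
  obtain ⟨i, hi, rfl⟩ := Finset.mem_image.mp htop
  have hle : r * t + i ≤ r * t := le_mul_of_mem_youngComplex ht hF hx
  have hi0 : 1 ≤ i := (Finset.mem_Icc.mp hi).1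
  omega

end DeleteTopRow

/-- Columns beyond `λ_1` carry no vertices, so a row enters only through its truncated length
`min λ_1 λ_j`; the bound on these holds for partitions as well as for compositions with
`λ_1 = λ_2`. -/
theorem youngComplex_deleteTopRow_small_general (t r : ℕ) (lam : ℕ → ℕ) (hr : 2 ≤ r)
    (h21 : lam 2 ≤ lam 1) (hrows : ∀ j, 2 ≤ j → j ≤ r → min (lam 1) (lam j) ≤ lam 2)
    (hle : lam 2 ≤ t) :
    { F | F ∈ youngComplex t r lam ∧
        F ∩ Finset.image (fun i => (r - 1) * t + i) (Finset.Icc 1 (lam 1)) = ∅ } =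
      youngComplex t (r - 1) (fun j => lam (j + 1)) := by
  obtain ⟨r, rfl⟩ : ∃ s, r = s + 1 := Nat.exists_eq_add_of_le' (by omega)
  ext F
  rw [Set.mem_ofPred_eq, ← Finset.disjoint_iff_inter_eq_empty]
  constructor
  · rintro ⟨hF, hdisj⟩
    exact mem_youngComplex_tail_of_disjoint_topRow (by omega) h21 hrows hF hdisj
  · intro hF
    exact ⟨youngComplex_tail_subset h21 hF, disjoint_topRow_of_mem_youngComplex_tail hle hF⟩

/-- For a partition `λ` with `r ≥ 2` parts, `λ_1 = λ_2` and `λ_1 ≤ t`, the subcomplex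
of `Δ_t^λ` of faces disjoint from the top row `{(r-1)t+1, …, (r-1)t+λ_1}` equals the
`t`-Young complex of `λ' = (λ_2, …, λ_r)`. -/
theorem youngComplex_deleteTopRow_small (t r : ℕ) (lam : ℕ → ℕ) (ht : 1 ≤ t)
    (hr : 2 ≤ r) (hlam : isPartition r lam) (h12 : lam 1 = lam 2) (hle : lam 1 ≤ t) :
    { F | F ∈ youngComplex t r lam ∧
        F ∩ Finset.image (fun i => (r - 1) * t + i) (Finset.Icc 1 (lam 1)) = ∅ } =
      youngComplex t (r - 1) (fun j => lam (j + 1)) :=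
  youngComplex_deleteTopRow_small_general t r lam hr h12.ge
    (fun j _ _ => (min_le_left (lam 1) (lam j)).trans h12.le) (h12.ge.trans hle)
end
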